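/- arXiv:1712.04607 — 3 statements merged into one kernel-verified Lean document; each statement's English description precedes it below -/
import Mathlib

section
/- Let R be a commutative reduced ring (Nil(R) = 0) and n ≥ 1. Then every matrix in M_n(R) is a sum of three idempotent matrices if and only if R satisfies the identity x^3 = x (i.e., a^3 = a for all a ∈ R). -/
/-!
*Necessity.* If idempotents `E`, `F`, `G` of `Kⁿ` sum to `c • 1 + N` with `N` of rank at most one
and `c ≠ 0, 1`, then `c • 1 - G` is invertible, so any two of the three ranks add up to at least
`n - 1`, and `2 r ≥ 3 n - 3` for the sum `r` of the ranks, which is also the trace. The complements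
`1 - E`, `1 - F`, `1 - G` satisfy the same hypothesis with `3 - c`. Taking `c = -1`, this confines
the trace of `N - 1` to a few integers, and a suitable `N` violates this unless `6 = 0`. Traces
being integers, each residue field of a prime of `R` then makes the image of every `a` an integer
modulo `6`, and those satisfy `x ^ 3 = x`.

*Sufficiency.* A matrix lives over the subring generated by its entries, which is finite, hence a
product of fields. Over a field the matrix splits into cyclic blocks. A cyclic endomorphism `T` has
a basis with `T bᵢ = bᵢ₊₁ + dᵢ bᵢ` off the last index, for `d` of our choosing. With `dᵢ = 1`
away from the ends, the even and the odd columns make up two idempotents, and the remainder is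
supported on the last column. Fixing the trace at the two ends puts a `1` in the corner of this
column, which makes the remainder idempotent as well.
-/

open Module Polynomial

/-- The property of being a sum of three idempotents. It is stated for a bare addition and
multiplication so as to serve matrices, endomorphisms and products of rings alike; the idempotents
need not commute. -/
def IsSumOfThreeIdempotents {A : Type*} [Mul A] [Add A] (a : A) : Prop :=
  ∃ e f g : A, IsIdempotentElem e ∧ IsIdempotentElem f ∧ IsIdempotentElem g ∧ a = e + f + g

namespace IsSumOfThreeIdempotents

theorem map {A B F : Type*} [NonUnitalNonAssocSemiring A] [NonUnitalNonAssocSemiring B]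
    [FunLike F A B] [NonUnitalRingHomClass F A B] (φ : F) {a : A}
    (ha : IsSumOfThreeIdempotents a) : IsSumOfThreeIdempotents (φ a) := by
  obtain ⟨e, f, g, he, hf, hg, rfl⟩ := ha
  exact ⟨φ e, φ f, φ g, he.map φ, hf.map φ, hg.map φ, by rw [map_add, map_add]⟩

theorem pi {κ : Type*} {A : κ → Type*} [∀ k, Mul (A k)] [∀ k, Add (A k)] {a : ∀ k, A k}
    (ha : ∀ k, IsSumOfThreeIdempotents (a k)) : IsSumOfThreeIdempotents a := by
  choose e f g he hf hg h using ha
  exact ⟨e, f, g, funext he, funext hf, funext hg, funext h⟩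

theorem directSum_lmap {R κ : Type*} [Semiring R] {V : κ → Type*} [∀ k, AddCommMonoid (V k)]
    [∀ k, Module R (V k)] {T : ∀ k, End R (V k)} (hT : ∀ k, IsSumOfThreeIdempotents (T k)) :
    IsSumOfThreeIdempotents (DirectSum.lmap T : End R (DirectSum κ V)) := by
  have idempotent {E : ∀ k, End R (V k)} (hE : ∀ k, IsIdempotentElem (E k)) :
      IsIdempotentElem (DirectSum.lmap E : End R (DirectSum κ V)) := by
    rw [IsIdempotentElem, End.mul_eq_comp, ← DirectSum.lmap_comp]
    exact congrArg _ (funext hE)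
  choose E F G hE hF hG h using hT
  refine ⟨_, _, _, idempotent hE, idempotent hF, idempotent hG, ?_⟩
  ext x k
  simp [h]

theorem of_linearEquiv {R V W : Type*} [Semiring R] [AddCommMonoid V] [AddCommMonoid W]
    [Module R V] [Module R W] (φ : V ≃ₗ[R] W) {S : End R V} {T : End R W}
    (hφ : ∀ x, φ (S x) = T (φ x)) (hT : IsSumOfThreeIdempotents T) :
    IsSumOfThreeIdempotents S := by
  have hS : φ.symm.conjRingEquiv T = S := by
    ext x
    simp [LinearEquiv.conjRingEquiv, ← hφ]
  exact hS ▸ hT.map φ.symm.conjRingEquiv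

end IsSumOfThreeIdempotents

section Rank

variable {K V : Type*} [Field K] [AddCommGroup V] [Module K V]

theorem range_smul_one_sub_eq_top {c : K} (hc : c * (c - 1) ≠ 0) {G : End K V}
    (hG : IsIdempotentElem G) : LinearMap.range (c • 1 - G) = ⊤ := by
  have hinv : (c • 1 - G) * ((c * (c - 1))⁻¹ • ((c - 1) • 1 + G)) = 1 := by
    have : (c • 1 - G) * ((c - 1) • 1 + G) = (c * (c - 1)) • 1 := by
      simp only [mul_add, sub_mul, smul_mul_assoc, mul_smul_comm, one_mul, mul_one, hG.eq]
      module
    rw [mul_smul_comm, this, inv_smul_smul₀ hc]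
  exact LinearMap.range_eq_top_of_surjective _ fun x => ⟨_, LinearMap.congr_fun hinv x⟩

variable [FiniteDimensional K V]

theorem finrank_range_one_sub_add_finrank_range {E : End K V} (hE : IsIdempotentElem E) :
    finrank K (LinearMap.range (1 - E)) + finrank K (LinearMap.range E) = finrank K V := by
  rw [← LinearMap.IsIdempotentElem.ker_eq_range_one_sub hE, add_comm]
  exact E.finrank_range_add_finrank_ker

theorem finrank_le_of_add_add_eq_smul_one_add {c : K} (hc : c * (c - 1) ≠ 0)
    {E F G N : End K V} (hG : IsIdempotentElem G) (h : E + F + G = c • 1 + N) :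
    finrank K V ≤ finrank K (LinearMap.range E) + finrank K (LinearMap.range F) +
      finrank K (LinearMap.range N) := by
  have hsum : c • 1 - G = E + F + -N := by linear_combination (norm := module) -h
  have htop : ⊤ ≤ LinearMap.range E ⊔ LinearMap.range F ⊔ LinearMap.range N := by
    rw [← range_smul_one_sub_eq_top hc hG, hsum, ← LinearMap.range_neg N]
    exact (LinearMap.range_add_le _ _).trans (sup_le_sup_right (LinearMap.range_add_le _ _) _)
  calc finrank K V = finrank K (⊤ : Submodule K V) := (finrank_top K V).symm
    _ ≤ _ := Submodule.finrank_mono htop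
    _ ≤ _ := Submodule.finrank_add_le_finrank_add_finrank _ _
    _ ≤ _ := by gcongr; exact Submodule.finrank_add_le_finrank_add_finrank _ _

theorem three_mul_finrank_le_of_add_add_eq_smul_one_add {c : K} (hc : c * (c - 1) ≠ 0)
    {E F G N : End K V} (hE : IsIdempotentElem E) (hF : IsIdempotentElem F)
    (hG : IsIdempotentElem G) (h : E + F + G = c • 1 + N) :
    3 * finrank K V ≤ 2 * (finrank K (LinearMap.range E) + finrank K (LinearMap.range F) +
      finrank K (LinearMap.range G)) + 3 * finrank K (LinearMap.range N) := by
  have hEF := finrank_le_of_add_add_eq_smul_one_add hc hG h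
  have hFG := finrank_le_of_add_add_eq_smul_one_add (E := F) (F := G) hc hE (by rw [← h]; abel)
  have hGE := finrank_le_of_add_add_eq_smul_one_add (E := G) (F := E) hc hF (by rw [← h]; abel)
  lia

theorem trace_add_add_eq_finrank_range {E F G : End K V} (hE : IsIdempotentElem E)
    (hF : IsIdempotentElem F) (hG : IsIdempotentElem G) :
    LinearMap.trace K V (E + F + G) = (finrank K (LinearMap.range E) +
      finrank K (LinearMap.range F) + finrank K (LinearMap.range G) : ℕ) := by
  rw [map_add, map_add, (LinearMap.IsIdempotentElem.isProj_range E hE).trace,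
    (LinearMap.IsIdempotentElem.isProj_range F hF).trace,
    (LinearMap.IsIdempotentElem.isProj_range G hG).trace]
  push_cast
  rfl

theorem IsSumOfThreeIdempotents.exists_trace_eq_natCast {T : End K V}
    (hT : IsSumOfThreeIdempotents T) : ∃ r : ℕ, LinearMap.trace K V T = r := by
  obtain ⟨E, F, G, hE, hF, hG, rfl⟩ := hT
  exact ⟨_, trace_add_add_eq_finrank_range hE hF hG⟩

theorem IsSumOfThreeIdempotents.exists_trace_eq_of_finrank_range_add_one_le {T : End K V}
    (hT : IsSumOfThreeIdempotents T) (h6 : (6 : K) ≠ 0)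
    (hrank : finrank K (LinearMap.range (T + 1)) ≤ 1) :
    ∃ r : ℕ, LinearMap.trace K V T = r ∧
      3 * finrank K V ≤ 2 * r + 3 ∧ 2 * r ≤ 3 * finrank K V + 3 := by
  obtain ⟨E, F, G, hE, hF, hG, rfl⟩ := hT
  set N := E + F + G + 1 with hN
  have h2 : (2 : K) ≠ 0 := fun h => h6 (by linear_combination 3 * h)
  have h12 : (12 : K) ≠ 0 := fun h => mul_ne_zero h2 h6 (by linear_combination h)
  have hlower := three_mul_finrank_le_of_add_add_eq_smul_one_add (c := -1) (N := N)
    (by ring_nf; exact h2) hE hF hG (by rw [hN]; module)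
  have hupper := three_mul_finrank_le_of_add_add_eq_smul_one_add (c := 4) (N := -N)
    (by ring_nf; exact h12) hE.one_sub hF.one_sub hG.one_sub (by rw [hN]; module)
  rw [LinearMap.range_neg] at hupper
  have hE' := finrank_range_one_sub_add_finrank_range hE
  have hF' := finrank_range_one_sub_add_finrank_range hF
  have hG' := finrank_range_one_sub_add_finrank_range hG
  exact ⟨_, trace_add_add_eq_finrank_range hE hF hG, by lia, by lia⟩

/-- The integer `(3 n + 5) / 2` exceeds the attainable traces by `1`, `2`, `3` or `4`, all of
which are invertible if `6` is. -/
theorem IsSumOfThreeIdempotents.six_eq_zero_of_trace_eq {T : End K V}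
    (hT : IsSumOfThreeIdempotents T) (hrank : finrank K (LinearMap.range (T + 1)) ≤ 1)
    (htrace : LinearMap.trace K V T = ((3 * finrank K V + 5) / 2 : ℕ)) : (6 : K) = 0 := by
  by_contra h6
  obtain ⟨r, hr, hlower, hupper⟩ := hT.exists_trace_eq_of_finrank_range_add_one_le h6 hrank
  obtain ⟨j, hj, hj1, hj4⟩ : ∃ j : ℕ, (3 * finrank K V + 5) / 2 = r + j ∧ 1 ≤ j ∧ j ≤ 4 :=
    ⟨(3 * finrank K V + 5) / 2 - r, by lia, by lia, by lia⟩
  have hj0 : (j : K) = 0 := by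
    rw [hr, hj, Nat.cast_add] at htrace
    exact left_eq_add.mp htrace
  have h12 : (12 : K) = 0 := by
    have hdvd : j ∣ 12 := by interval_cases j <;> norm_num
    exact_mod_cast zero_dvd_iff.mp (hj0 ▸ Nat.cast_dvd_cast (α := K) hdvd)
  exact h6 (pow_eq_zero_iff two_ne_zero |>.mp (by linear_combination 3 * h12))

end Rank

section Necessity

variable {ι : Type*} [Fintype ι]

theorem six_eq_zero_of_isSumOfThreeIdempotents_neg_one_add_single [DecidableEq ι] {K : Type*}
    [Field K] {i : ι} (h : IsSumOfThreeIdempotents (-1 + Matrix.single i i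
      ((Fintype.card ι + (3 * Fintype.card ι + 5) / 2 : ℕ) : K))) : (6 : K) = 0 := by
  have hvec (c : K) :
      Matrix.single i i c = Matrix.vecMulVec (c • Pi.single i 1) (Pi.single i 1) := by
    rw [Matrix.smul_vecMulVec, ← Matrix.single_eq_single_vecMulVec_single, Matrix.smul_single,
      smul_eq_mul, mul_one]
  refine (h.map (Matrix.toLinAlgEquiv' (R := K) (n := ι))).six_eq_zero_of_trace_eq ?_ ?_
  · rw [← map_one (Matrix.toLinAlgEquiv' (R := K) (n := ι)), ← map_add, neg_add_eq_sub,
      sub_add_cancel, hvec]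
    exact Matrix.rank_vecMulVec_le _ _
  · refine (Matrix.trace_toLin'_eq _).trans ?_
    rw [Matrix.trace_add, Matrix.trace_neg, Matrix.trace_one, Matrix.trace_single_eq_same,
      finrank_fintype_fun_eq_card, Nat.cast_add, neg_add_cancel_left]

theorem natCast_pow_three_of_six_eq_zero {R : Type*} [CommRing R] (h6 : (6 : R) = 0) (m : ℕ) :
    (m : R) ^ 3 = m := by
  have hdvd : (6 : ℤ) ∣ (m : ℤ) ^ 3 - m := by
    rw [← Nat.cast_ofNat, ← ZMod.intCast_zmod_eq_zero_iff_dvd]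
    push_cast
    generalize (m : ZMod 6) = z
    revert z
    decide
  obtain ⟨k, hk⟩ := hdvd
  have hk' := congrArg (Int.cast : ℤ → R) hk
  push_cast at hk'
  linear_combination hk' + k * h6

theorem pow_three_eq_self_of_forall_isSumOfThreeIdempotents [Nonempty ι] {R : Type*}
    [CommRing R] [IsReduced R] (H : ∀ A : Matrix ι ι R, IsSumOfThreeIdempotents A) (a : R) :
    a ^ 3 = a := by
  classical
  suffices a ^ 3 - a ∈ nilradical R by
    rwa [nilradical_eq_zero, Ideal.zero_eq_bot, Ideal.mem_bot, sub_eq_zero] at this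
  rw [nilradical_eq_sInf, Ideal.mem_sInf]
  intro P (hP : P.IsPrime)
  rw [← Ideal.algebraMap_residueField_eq_zero]
  set f := algebraMap R P.ResidueField
  let i : ι := Classical.arbitrary ι
  have hsingle (c : R) : f.mapMatrix (Matrix.single i i c) = Matrix.single i i (f c) := by
    simp
  have h6 : (6 : P.ResidueField) = 0 := by
    refine six_eq_zero_of_isSumOfThreeIdempotents_neg_one_add_single (i := i) ?_
    rw [← map_natCast f, ← hsingle, ← map_one f.mapMatrix, ← map_neg, ← map_add]
    exact (H _).map f.mapMatrix
  obtain ⟨m, hm⟩ : ∃ m : ℕ, f a = m := by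
    have hT := ((H (Matrix.single i i a)).map f.mapMatrix).map Matrix.toLinAlgEquiv'
    rw [hsingle] at hT
    rw [← Matrix.trace_single_eq_same i (f a), ← Matrix.trace_toLin'_eq]
    exact hT.exists_trace_eq_natCast
  rw [map_sub, map_pow, hm, natCast_pow_three_of_six_eq_zero h6, sub_self]

end Necessity

section Cyclic

theorem exists_basis_apply_castSucc {K V : Type*} [Field K] [AddCommGroup V] [Module K V]
    {m : ℕ} (hm : finrank K V = m + 1) {T : End K V} {v : V}
    (hv : ∀ x, ∃ p : K[X], aeval T p v = x) (d : ℕ → K) :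
    ∃ b : Basis (Fin (m + 1)) K V,
      ∀ i : Fin m, T (b i.castSucc) = b i.succ + d i • b i.castSucc := by
  have : FiniteDimensional K V := .of_finrank_pos (by lia)
  let φ : K[X] →ₗ[K] V := LinearMap.applyₗ v ∘ₗ (aeval T).toLinearMap
  -- The basis consists of the values at `T` of the Newton polynomials `∏ j < i, (X - d j)`.
  let S : Polynomial.Sequence K :=
    ⟨fun i => Lagrange.nodal (Finset.range i) d, fun i => by simp⟩
  have hspan : Submodule.span K (Set.range fun i : Fin (m + 1) => φ (S i)) = ⊤ := by
    have hrange : (Set.range fun i : Fin (m + 1) => φ (S i)) = φ '' (S '' Set.Iio (m + 1)) := by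
      ext x
      simp [Fin.exists_iff]
    rw [hrange, Submodule.span_image,
      S.span_degreeLT fun i _ => (leadingCoeff_ne_zero.mpr (S.ne_zero i)).isUnit, eq_top_iff]
    rintro x -
    obtain ⟨p, rfl⟩ := hv x
    refine ⟨p %ₘ T.charpoly, mem_degreeLT.mpr ?_, ?_⟩
    · rw [← hm, ← T.charpoly_natDegree, ← degree_eq_natDegree T.charpoly_monic.ne_zero]
      exact degree_modByMonic_lt _ T.charpoly_monic
    · exact congrArg (· v) (aeval_modByMonic_eq_self_of_root T.aeval_self_charpoly)
  let b := basisOfTopLeSpanOfCardEqFinrank _ hspan.ge (by rw [Fintype.card_fin, hm])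
  have hb (i : Fin (m + 1)) : b i = aeval T (Lagrange.nodal (Finset.range i) d) v := by
    simp [b, φ, S]
  refine ⟨b, fun i => ?_⟩
  simp [hb, Finset.range_add_one, Lagrange.nodal_insert_eq_nodal]

variable {R V : Type*} [CommRing R] [AddCommGroup V] [Module R V] {m : ℕ}

/-- The endomorphism attached to a basis `b` and a set `p` of indices, meant to contain no two
consecutive ones: it sends `b i` to `b i + b (i + 1)` for `i` in `p`, and kills the other basis
vectors. The scalars `g` and `h`, meant to be idempotent, adjust the two ends: if `0` is not in `p`
then `b 0` goes to `g • b 0`, and if the last index is in `p` then the last basis vector, which has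
no successor, goes to its multiple by `h`. For complementary sets `p`, two of these endomorphisms
add up to a bidiagonal one with diagonal entries `1`, except for the corrections at the ends. -/
noncomputable def staircase (b : Basis (Fin (m + 1)) R V) (p : Fin (m + 1) → Prop)
    [DecidablePred p] (g h : R) : End R V :=
  b.constr R fun i =>
    if p i then Fin.lastCases (h • b (Fin.last m)) (fun j => b j.castSucc + b j.succ) i
    else (if i = 0 then g else 0) • b i

theorem staircase_apply (b : Basis (Fin (m + 1)) R V) (p : Fin (m + 1) → Prop)
    [DecidablePred p] (g h : R) (i : Fin (m + 1)) :
    staircase b p g h (b i) =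
      if p i then Fin.lastCases (h • b (Fin.last m)) (fun j => b j.castSucc + b j.succ) i
      else (if i = 0 then g else 0) • b i :=
  b.constr_basis R _ i

theorem isIdempotentElem_staircase (b : Basis (Fin (m + 1)) R V) {p : Fin (m + 1) → Prop}
    [DecidablePred p] (hp : ∀ j : Fin m, p j.castSucc → ¬ p j.succ) {g h : R}
    (hg : IsIdempotentElem g) (hh : IsIdempotentElem h) :
    IsIdempotentElem (staircase b p g h) := by
  refine b.ext fun i => ?_
  rw [End.mul_apply]
  by_cases hi : p i
  · induction i using Fin.lastCases with
    | last => simp [staircase_apply, hi, smul_smul, hh.eq]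
    | cast j => simp [staircase_apply, hi, hp j hi]
  · rw [staircase_apply, if_neg hi, map_smul, staircase_apply, if_neg hi, smul_smul]
    split_ifs <;> simp [hg.eq]

theorem staircase_add_staircase_not_apply (b : Basis (Fin (m + 1)) R V) (p : Fin (m + 1) → Prop)
    [DecidablePred p] (g h : R) (i : Fin (m + 1)) :
    (staircase b p g h + staircase b (fun i => ¬ p i) g h) (b i) =
      Fin.lastCases (h • b (Fin.last m)) (fun j => b j.castSucc + b j.succ) i +
        (if i = 0 then g else 0) • b i := by
  by_cases hi : p i <;> simp [staircase_apply, hi, add_comm]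

theorem isIdempotentElem_of_apply_castSucc_eq_zero (b : Basis (Fin (m + 1)) R V) {G : End R V}
    (hG : ∀ i : Fin m, G (b i.castSucc) = 0)
    (hlast : b.repr (G (b (Fin.last m))) (Fin.last m) = 1) : IsIdempotentElem G := by
  have hGx (x : V) : G x = b.repr x (Fin.last m) • G (b (Fin.last m)) := by
    conv_lhs => rw [← b.sum_repr x, map_sum, Fin.sum_univ_castSucc]
    simp only [map_smul, hG, smul_zero, Finset.sum_const_zero, zero_add]
  refine b.ext fun i => ?_
  rw [End.mul_apply]
  induction i using Fin.lastCases with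
  | last => rw [hGx (G _), hlast, one_smul]
  | cast j => rw [hG, map_zero]

theorem isSumOfThreeIdempotents_of_apply_castSucc (b : Basis (Fin (m + 1)) R V) {T : End R V}
    {g h : R} (hg : IsIdempotentElem g) (hh : IsIdempotentElem h)
    (hT : ∀ i : Fin m, T (b i.castSucc) =
      b i.succ + (1 + if i.castSucc = 0 then g else 0) • b i.castSucc)
    (htrace : LinearMap.trace R V T = (m + 1 : ℕ) + g + h) :
    IsSumOfThreeIdempotents T := by
  let p (i : Fin (m + 1)) : Prop := Even (i : ℕ)
  have hp (j : Fin m) : p j.castSucc ↔ ¬ p j.succ := by simp [p, Nat.even_add_one]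
  set E := staircase b p g h
  set F := staircase b (fun i => ¬ p i) g h
  have hlast : b.repr (T (b (Fin.last m))) (Fin.last m) =
      1 + (if Fin.last m = 0 then g else 0) + h := by
    have hdiag : ∑ i : Fin (m + 1), (1 + if i = 0 then g else 0) = (m + 1 : ℕ) + g := by
      simp [Finset.sum_add_distrib]
    have hcast (i : Fin m) : b.repr (T (b i.castSucc)) i.castSucc =
        1 + if i.castSucc = 0 then g else 0 := by
      simp [hT, i.castSucc_lt_succ.ne']
    simp only [LinearMap.trace_eq_matrix_trace R b, Matrix.trace, Matrix.diag,
      LinearMap.toMatrix_apply, ← hdiag, Fin.sum_univ_castSucc, hcast] at htrace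
    linear_combination htrace
  refine ⟨E, F, T - (E + F), isIdempotentElem_staircase b (fun j => (hp j).mp) hg hh,
    isIdempotentElem_staircase b (fun j => (hp j).not.mp) hg hh,
    isIdempotentElem_of_apply_castSucc_eq_zero b (fun i => ?_) ?_, by abel⟩
  · rw [LinearMap.sub_apply, hT, staircase_add_staircase_not_apply, Fin.lastCases_castSucc]
    module
  · rw [LinearMap.sub_apply, map_sub, Finsupp.sub_apply, hlast, staircase_add_staircase_not_apply,
      Fin.lastCases_last]
    simp only [map_add, map_smul, Finsupp.add_apply, Finsupp.smul_apply, b.repr_self,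
      Finsupp.single_eq_same, smul_eq_mul, mul_one]
    ring

theorem exists_isIdempotentElem_add_eq_of_pow_three_eq_self (hR : ∀ x : R, x ^ 3 = x) (t : R) :
    ∃ g h : R, IsIdempotentElem g ∧ IsIdempotentElem h ∧ t = g + h := by
  refine ⟨t ^ 2, t - t ^ 2, ?_, ?_, by ring⟩
  · rw [IsIdempotentElem]
    linear_combination t * hR t
  · rw [IsIdempotentElem]
    linear_combination (t - 1) * hR t - hR (t - 1)

theorem isSumOfThreeIdempotents_of_cyclic {K V : Type*} [Field K] [AddCommGroup V] [Module K V]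
    [FiniteDimensional K V] (hK : ∀ x : K, x ^ 3 = x) {T : End K V} {v : V}
    (hv : ∀ x, ∃ p : K[X], aeval T p v = x) : IsSumOfThreeIdempotents T := by
  obtain ⟨g, h, hg, hh, hgh⟩ := exists_isIdempotentElem_add_eq_of_pow_three_eq_self hK
    (LinearMap.trace K V T - finrank K V)
  rcases subsingleton_or_nontrivial V with _ | _
  · exact ⟨0, 0, 0, .zero, .zero, .zero, Subsingleton.elim _ _⟩
  obtain ⟨m, hm⟩ := Nat.exists_eq_add_one_of_ne_zero (finrank_pos (R := K) (M := V)).ne'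
  obtain ⟨b, hb⟩ := exists_basis_apply_castSucc hm hv
    fun i => 1 + if i = 0 then g else 0
  exact isSumOfThreeIdempotents_of_apply_castSucc b hg hh
    (fun i => by simpa [Fin.ext_iff] using hb i)
    (by rw [← hm]; linear_combination hgh)

end Cyclic

section Field

variable {K : Type*} [Field K]

theorem isSumOfThreeIdempotents_lsmul_X_quotient_span (hK : ∀ x : K, x ^ 3 = x) {q : K[X]}
    (hq : q ≠ 0) :
    IsSumOfThreeIdempotents
      (Algebra.lsmul K K (K[X] ⧸ Submodule.span K[X] {q}) (X : K[X])) := by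
  have : FiniteDimensional K (K[X] ⧸ Submodule.span K[X] {q}) :=
    (AdjoinRoot.powerBasis hq).finite
  refine isSumOfThreeIdempotents_of_cyclic hK (v := Submodule.Quotient.mk (1 : K[X])) fun x => ?_
  obtain ⟨p, rfl⟩ := Submodule.Quotient.mk_surjective _ x
  refine ⟨p, ?_⟩
  rw [aeval_algHom_apply, aeval_X_left_apply]
  exact congrArg Submodule.Quotient.mk (mul_one p)

theorem isSumOfThreeIdempotents_end (hK : ∀ x : K, x ^ 3 = x) {V : Type*} [AddCommGroup V]
    [Module K V] [FiniteDimensional K V] (T : End K V) : IsSumOfThreeIdempotents T := by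
  classical
  obtain ⟨κ, _, p, hp, e, ⟨φ⟩⟩ := Module.equiv_directSum_of_isTorsion
    (Module.AEval.isTorsion_of_finiteDimensional K V T)
  refine .of_linearEquiv ((Module.AEval.of K V T).trans (φ.restrictScalars K)) (fun x => ?_)
    (.directSum_lmap fun k => isSumOfThreeIdempotents_lsmul_X_quotient_span hK
      (pow_ne_zero (e k) (hp k).ne_zero))
  have hX : Module.AEval.of K V T (T x) = (X : K[X]) • Module.AEval.of K V T x :=
    (Module.AEval.X_smul_of ..).symm
  rw [LinearEquiv.trans_apply, hX, LinearEquiv.restrictScalars_apply, map_smul]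
  ext k
  exact DirectSum.smul_apply ..

theorem isSumOfThreeIdempotents_matrix_of_field (hK : ∀ x : K, x ^ 3 = x) {ι : Type*}
    [Fintype ι] (A : Matrix ι ι K) : IsSumOfThreeIdempotents A := by
  classical
  rw [← LinearMap.toMatrix'_toLin' A]
  exact (isSumOfThreeIdempotents_end hK (Matrix.toLin' A)).map
    (LinearMap.toMatrixAlgEquiv' (R := K) (n := ι))

end Field

section Sufficiency

variable {ι : Type*} [Fintype ι] {R : Type*} [CommRing R]

theorem isSumOfThreeIdempotents_matrix_of_finite [Finite R] (hR : ∀ x : R, x ^ 3 = x)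
    (A : Matrix ι ι R) : IsSumOfThreeIdempotents A := by
  classical
  have : IsReduced R := (isReduced_iff_pow_one_lt 2 one_lt_two).mpr fun x hx => by
    rw [← hR x, pow_succ, hx, zero_mul]
  let φ : Matrix ι ι R ≃+* ∀ m : MaximalSpectrum R, Matrix ι ι (R ⧸ m.asIdeal) :=
    (IsArtinianRing.equivPi R).toRingEquiv.mapMatrix.trans Matrix.piRingEquiv
  have hφ : IsSumOfThreeIdempotents (φ A) := .pi fun m => by
    let _ := Ideal.Quotient.field m.asIdeal
    refine isSumOfThreeIdempotents_matrix_of_field (fun x => ?_) _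
    obtain ⟨x, rfl⟩ := Ideal.Quotient.mk_surjective x
    rw [← map_pow, hR]
  simpa using hφ.map φ.symm

theorem finite_adjoin_of_pow_three_eq_self (hR : ∀ x : R, x ^ 3 = x) {s : Set R} (hs : s.Finite) :
    Finite (Algebra.adjoin ℤ s) := by
  have : Module.Finite ℤ (Algebra.adjoin ℤ s) :=
    Algebra.finite_adjoin_of_finite_of_isIntegral hs fun x _ =>
      ⟨X ^ 3 - X, by monicity!, by simp [hR x]⟩
  have h6 : (6 : Algebra.adjoin ℤ s) = 0 :=
    Subtype.ext (show (6 : R) = 0 by linear_combination hR 2)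
  refine Module.finite_of_fg_torsion _ fun x => ⟨⟨6, by simp⟩, ?_⟩
  rw [Submonoid.mk_smul, zsmul_eq_mul, Int.cast_ofNat, h6, zero_mul]

theorem isSumOfThreeIdempotents_matrix (hR : ∀ x : R, x ^ 3 = x) (A : Matrix ι ι R) :
    IsSumOfThreeIdempotents A := by
  classical
  let S := Algebra.adjoin ℤ (Set.range fun x : ι × ι => A x.1 x.2)
  have : Finite S := finite_adjoin_of_pow_three_eq_self hR (Set.finite_range _)
  have hS (x : S) : x ^ 3 = x := Subtype.ext (hR x)
  let B : Matrix ι ι S := .of fun i j => ⟨A i j, Algebra.subset_adjoin ⟨(i, j), rfl⟩⟩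
  exact (isSumOfThreeIdempotents_matrix_of_finite hS B).map S.val.toRingHom.mapMatrix

end Sufficiency

theorem matrix_sum_three_idempotents_reduced_iff_general (R : Type*) [CommRing R] [IsReduced R]
    (ι : Type*) [Fintype ι] [Nonempty ι] :
    (∀ A : Matrix ι ι R, IsSumOfThreeIdempotents A) ↔ ∀ a : R, a ^ 3 = a :=
  ⟨pow_three_eq_self_of_forall_isSumOfThreeIdempotents, isSumOfThreeIdempotents_matrix⟩

/-- For a commutative reduced ring `R` and `n ≥ 1`, every matrix in `M_n(R)` is a sum of
three idempotent matrices if and only if `R` satisfies the identity `x^3 = x`. -/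
theorem matrix_sum_three_idempotents_reduced_iff (R : Type*) [CommRing R] [IsReduced R]
    (n : ℕ) (hn : 1 ≤ n) :
    (∀ A : Matrix (Fin n) (Fin n) R,
      ∃ E₁ E₂ E₃ : Matrix (Fin n) (Fin n) R,
        E₁ * E₁ = E₁ ∧ E₂ * E₂ = E₂ ∧ E₃ * E₃ = E₃ ∧ A = E₁ + E₂ + E₃) ↔
    (∀ a : R, a ^ 3 = a) := by
  have : Nonempty (Fin n) := Fin.pos_iff_nonempty.mp hn
  exact matrix_sum_three_idempotents_reduced_iff_general R (Fin n)
end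

section
/- The matrix [[1, 1], [1, 0]] in M_2(Z_4) is not a sum of three idempotent matrices. -/
/-!
Over a commutative ring `R` whose only idempotents are `0` and `1`, Cayley–Hamilton shows that an
idempotent `2 × 2` matrix is `0`, `1`, or has trace `1` and determinant `0`. Suppose that a
non-scalar matrix `A` of trace `1` is a sum of three idempotents, `r` of them of the last kind.
Then `r ≠ 0` because `A` is not scalar. If `r = 1`, then `A = E + k` with `E` of trace `1` and
determinant `0` and `k` scalar, so `2k = 0` and `2 det A = 2k(k + 1) = 0`. Comparing traces gives
`2 = 1` or `4 = 1` if `r = 2`, and `3 = 1` if `r = 3`. For `A = [[1, 1], [1, 0]]` over `ℤ/4` none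
of this can happen, as `2 det A = -2 ≠ 0`.
-/

open Matrix

section TwoByTwo

variable {R : Type*} [CommRing R]

theorem mul_self_add_det_smul_one_fin_two (A : Matrix (Fin 2) (Fin 2) R) :
    A * A + A.det • (1 : Matrix (Fin 2) (Fin 2) R) = A.trace • A := by
  nontriviality R
  have cayley_hamilton := A.aeval_self_charpoly
  simp only [charpoly_fin_two, map_add, map_sub, map_mul, Polynomial.aeval_X, Polynomial.aeval_C,
    Algebra.algebraMap_eq_smul_one, sq, smul_one_mul] at cayley_hamilton
  rw [← sub_eq_zero, ← cayley_hamilton]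
  abel

theorem det_add_scalar_fin_two (A : Matrix (Fin 2) (Fin 2) R) (k : R) :
    (A + scalar (Fin 2) k).det = A.det + k * A.trace + k ^ 2 := by
  simp only [scalar_apply, det_fin_two, trace_fin_two, Matrix.add_apply, diagonal_apply_eq,
    diagonal_apply_ne, ne_eq, zero_ne_one, one_ne_zero, not_false_eq_true, add_zero]
  ring

theorem two_mul_det_eq_zero_of_trace_eq_one_of_eq_add {A E S : Matrix (Fin 2) (Fin 2) R}
    (htr : A.trace = 1) (hE : E.trace = 1 ∧ E.det = 0)
    (hS : S ∈ (scalar (Fin 2) : R →+* _).range) (hA : A = E + S) : 2 * A.det = 0 := by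
  obtain ⟨k, rfl⟩ := hS
  have two_mul_k : 2 * k = 0 := by
    simpa [hA, hE.1, trace_fin_two (diagonal _), two_mul] using htr
  rw [hA, det_add_scalar_fin_two, hE.1, hE.2]
  linear_combination (1 + k) * two_mul_k

theorem eq_zero_or_eq_one_or_trace_det_of_isIdempotentElem
    (hR : ∀ e : R, IsIdempotentElem e → e = 0 ∨ e = 1)
    {E : Matrix (Fin 2) (Fin 2) R} (hE : IsIdempotentElem E) :
    (E = 0 ∨ E = 1) ∨ (E.trace = 1 ∧ E.det = 0) := by
  have det_idem : IsIdempotentElem E.det := by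
    rw [isIdempotentElem_iff, ← det_mul, hE.eq]
  rcases hR E.det det_idem with hdet | hdet
  · have eq_trace_smul : E = E.trace • E := by
      simpa [hdet, hE.eq] using mul_self_add_det_smul_one_fin_two E
    have trace_idem : IsIdempotentElem E.trace := by
      simpa [isIdempotentElem_iff] using (congrArg trace eq_trace_smul).symm
    rcases hR E.trace trace_idem with htr | htr
    · rw [htr, zero_smul] at eq_trace_smul
      exact .inl (.inl eq_trace_smul)
    · exact .inr ⟨htr, hdet⟩
  · have hunit : IsUnit E := (isUnit_iff_isUnit_det E).mpr (hdet ▸ isUnit_one)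
    exact .inl (.inr ((IsIdempotentElem.iff_eq_one_of_isUnit hunit).mp hE))

theorem trace_add_one_ne_zero_of_eq_zero_or_eq_one (h3 : (3 : R) ≠ 0)
    {Z : Matrix (Fin 2) (Fin 2) R} (hZ : Z = 0 ∨ Z = 1) : Z.trace + 1 ≠ 0 := by
  have : Nontrivial R := ⟨_, _, h3⟩
  rcases hZ with rfl | rfl
  · simp
  · simpa [show (2 : R) + 1 = 3 by norm_num] using h3

theorem matrix_zmod4_not_sum_three_idempotents_general
    (hR : ∀ e : R, IsIdempotentElem e → e = 0 ∨ e = 1) (h3 : (3 : R) ≠ 0)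
    {A : Matrix (Fin 2) (Fin 2) R} (hA : A ∉ (scalar (Fin 2) : R →+* _).range)
    (htr : A.trace = 1) (hdet : 2 * A.det ≠ 0) :
    ¬ ∃ E₁ E₂ E₃ : Matrix (Fin 2) (Fin 2) R,
      IsIdempotentElem E₁ ∧ IsIdempotentElem E₂ ∧ IsIdempotentElem E₃ ∧ A = E₁ + E₂ + E₃ := by
  rintro ⟨E, F, G, hE, hF, hG, hsum⟩
  have trace_sum : E.trace + F.trace + G.trace = 1 := by rw [← htr, hsum, trace_add, trace_add]
  have two_mul_det {X Y} := two_mul_det_eq_zero_of_trace_eq_one_of_eq_add (E := X) (S := Y) htr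
  have scalar_or_trace_det {X : Matrix (Fin 2) (Fin 2) R} (hX : IsIdempotentElem X) :
      (X ∈ (scalar (Fin 2) : R →+* _).range ∧ X.trace + 1 ≠ 0) ∨ (X.trace = 1 ∧ X.det = 0) :=
    (eq_zero_or_eq_one_or_trace_det_of_isIdempotentElem hR hX).imp_left fun h ↦
      ⟨h.elim (· ▸ zero_mem _) (· ▸ one_mem _),
        trace_add_one_ne_zero_of_eq_zero_or_eq_one h3 h⟩
  rcases scalar_or_trace_det hE with hE | hE <;>
  rcases scalar_or_trace_det hF with hF | hF <;>
  rcases scalar_or_trace_det hG with hG | hG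
  · exact hA (hsum ▸ add_mem (add_mem hE.1 hF.1) hG.1)
  · exact hdet (two_mul_det hG (add_mem hE.1 hF.1) (by rw [hsum]; abel))
  · exact hdet (two_mul_det hF (add_mem hE.1 hG.1) (by rw [hsum]; abel))
  · exact hE.2 (by linear_combination trace_sum - hF.1 - hG.1)
  · exact hdet (two_mul_det hE (add_mem hF.1 hG.1) (by rw [hsum]; abel))
  · exact hF.2 (by linear_combination trace_sum - hE.1 - hG.1)
  · exact hG.2 (by linear_combination trace_sum - hE.1 - hF.1)
  · have two_eq_zero : (2 : R) = 0 := by linear_combination trace_sum - hE.1 - hF.1 - hG.1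
    exact hdet (by rw [two_eq_zero, zero_mul])

end TwoByTwo

/-- The matrix `[[1, 1], [1, 0]]` in `M_2(ℤ/4)` is not a sum of three idempotent
matrices. -/
theorem matrix_zmod4_not_sum_three_idempotents :
    ¬ ∃ E₁ E₂ E₃ : Matrix (Fin 2) (Fin 2) (ZMod 4),
      E₁ * E₁ = E₁ ∧ E₂ * E₂ = E₂ ∧ E₃ * E₃ = E₃ ∧
        !![(1 : ZMod 4), 1; 1, 0] = E₁ + E₂ + E₃ :=
  matrix_zmod4_not_sum_three_idempotents_general (by unfold IsIdempotentElem; decide) (by decide)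
    (by simp only [RingHom.mem_range]; decide) (by simp) (by rw [det_fin_two_of]; decide)
end

section
/- Let R be a commutative ring and n ≥ 1. Then every matrix in M_n(R) is a sum of three involutive matrices (A = U_1 + U_2 + U_3 with U_i^2 = I_n for each i) if and only if 3 = 0 in R and R satisfies the identity x^3 = x (equivalently, R is a subdirect product of copies of Z_3). -/
/-!
Suppose every matrix is a sum of three involutive matrices; this passes to every residue field.
A scalar `a = u + v + w` with `2 * a` invertible forces `u`, `v`, `w` to commute pairwise, and then
`(a² - 1) (a² - 9) = 0`. Over a field, characteristic two is excluded because every involutive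
matrix then has the trace of the identity. In odd dimension, write `0 = U + V + W`: then `U`
anticommutes with `V - W`, whose square is `3`, and determinants give `3 = 0`. In even dimension,
write `single o o 1 = U + V + W` and compress to a subspace or quotient invariant under `U` and `V`;
it has dimension two or is of odd dimension. Hence `3` and `x ^ 3 - x` lie in the Jacobson radical
of the ring, and the quartic identity for suitable scalars shows that they vanish.

Conversely, the entries of a matrix lie in a Noetherian subring satisfying `x ^ 3 = x`, which is
Artinian and reduced, hence a finite product of fields. Since `2 * p - 1` is involutive for
idempotent `p`, it remains to write an endomorphism of a vector space as a sum of three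
idempotents, and one may assume it is multiplication by `X` on `K[X] ⧸ (q)`. In a suitable Newton
basis `X` maps `b k` to `b k + b (k + 1)`, up to a correction at the two ends; the links with `k`
even and those with `k` odd add up to two idempotents, and the remainder is an idempotent of rank
one.
-/

/-- `x` is a sum of three elements satisfying `p`; used with `p` being `IsInvolutive` or
`IsIdempotentElem`. -/
def IsSumOfThree {M : Type*} [Add M] (p : M → Prop) (x : M) : Prop :=
  ∃ a b c, p a ∧ p b ∧ p c ∧ x = a + b + c

theorem IsSumOfThree.map {M N F : Type*} [Add M] [Add N] [FunLike F M N] [AddHomClass F M N]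
    {p : M → Prop} {q : N → Prop} {x : M} (hx : IsSumOfThree p x) (f : F)
    (hpq : ∀ a, p a → q (f a)) : IsSumOfThree q (f x) := by
  obtain ⟨a, b, c, ha, hb, hc, rfl⟩ := hx
  exact ⟨f a, f b, f c, hpq a ha, hpq b hb, hpq c hc, by simp only [map_add]⟩

/-- An element of a monoid is involutive if its square is the identity; `u = 1` is allowed. -/
def IsInvolutive {M : Type*} [Monoid M] (u : M) : Prop :=
  u ^ 2 = 1

namespace IsInvolutive

theorem mul_self {M : Type*} [Monoid M] {u : M} (hu : IsInvolutive u) : u * u = 1 := by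
  rw [← sq]
  exact hu

theorem of_mul_self {M : Type*} [Monoid M] {u : M} (hu : u * u = 1) : IsInvolutive u := by
  rwa [IsInvolutive, sq]

theorem map {M N F : Type*} [Monoid M] [Monoid N] [FunLike F M N] [MonoidHomClass F M N]
    {u : M} (hu : IsInvolutive u) (f : F) : IsInvolutive (f u) := by
  rw [IsInvolutive, ← map_pow, hu, map_one]

theorem isUnit {M : Type*} [Monoid M] {u : M} (hu : IsInvolutive u) : IsUnit u :=
  IsUnit.of_pow_eq_one hu two_ne_zero

section Ring

variable {M : Type*} [Ring M] {u v w x : M}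

theorem commute_add_mul_add (hu : IsInvolutive u) (hv : IsInvolutive v) :
    Commute u ((u + v) * (u + v)) := by
  have hsq : (u + v) * (u + v) = 2 + (u * v + v * u) := by
    rw [← one_add_one_eq_two]
    nth_rw 1 [← hu.mul_self, ← hv.mul_self]
    noncomm_ring
  have huv : Commute u (u * v + v * u) := by
    rw [commute_iff_eq, mul_add, add_mul, ← mul_assoc, hu.mul_self, mul_assoc v, hu.mul_self,
      one_mul, mul_one, ← mul_assoc, add_comm]
  rw [hsq]
  exact (Commute.ofNat_right u 2).add_right huv

/- `(u + v)² = (x - w)² = (x² - xw - wx) + 1`. -/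
theorem commute_of_add_add_eq (hu : IsInvolutive u) (hv : IsInvolutive v) (hw : IsInvolutive w)
    (h : u + v + w = x) : Commute u (x * x - x * w - w * x) := by
  have hsq : x * x - x * w - w * x = (u + v) * (u + v) - 1 := by
    rw [eq_sub_of_add_eq h, ← hw.mul_self]
    noncomm_ring
  rw [hsq]
  exact (hu.commute_add_mul_add hv).sub_right (Commute.one_right u)

/- With `q = uv + uw + vw` one has `(u + v + w)² = 3 + 2q` and `q² = 3 + 2q`. -/
theorem quartic_eq_zero_of_commute (hu : IsInvolutive u) (hv : IsInvolutive v)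
    (hw : IsInvolutive w) (huv : Commute u v) (huw : Commute u w) (hvw : Commute v w) :
    ((u + v + w) ^ 2 - 1) * ((u + v + w) ^ 2 - 9) = 0 := by
  set q := u * v + u * w + v * w with hq
  have hs : (u + v + w) ^ 2 = 3 + 2 * q := by
    have : (u + v + w) ^ 2 = u * u + v * v + w * w + (u * v + v * u) + (u * w + w * u)
        + (v * w + w * v) := by noncomm_ring
    rw [this, hu.mul_self, hv.mul_self, hw.mul_self, ← huv.eq, ← huw.eq, ← hvw.eq]
    grind
  have hqq : q * q = 3 + 2 * q := by
    have hu' (x : M) : u * (u * x) = x := by rw [← mul_assoc, hu.mul_self, one_mul]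
    have hv' (x : M) : v * (v * x) = x := by rw [← mul_assoc, hv.mul_self, one_mul]
    simp only [hq, mul_add, add_mul, mul_assoc, huv.symm.left_comm, huw.symm.left_comm,
      huv.symm.eq, hvw.symm.eq, hvw.symm.left_comm, hu', hv', hu.mul_self,
      hv.mul_self, hw.mul_self, mul_one]
    grind
  have : ((u + v + w) ^ 2 - 1) * ((u + v + w) ^ 2 - 9) = 4 * (q * q - (3 + 2 * q)) := by
    rw [hs]
    grind
  rw [this, hqq, sub_self, mul_zero]

end Ring

end IsInvolutive

theorem algebraMap_quartic_eq_zero {R M : Type*} [CommRing R] [Ring M] [Algebra R M] {a : R}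
    (ha : IsUnit (2 * a)) (h : IsSumOfThree IsInvolutive (algebraMap R M a)) :
    algebraMap R M ((a ^ 2 - 1) * (a ^ 2 - 9)) = 0 := by
  have commute_of_add_add_eq {u v w : M} (hu : IsInvolutive u) (hv : IsInvolutive v)
      (hw : IsInvolutive w) (h : u + v + w = algebraMap R M a) : Commute u w := by
    have hsub := hu.commute_of_add_add_eq hv hw h
    have hcomm : algebraMap R M a * algebraMap R M a - algebraMap R M a * w - w * algebraMap R M a =
        algebraMap R M (a * a) - (2 * a) • w := by
      rw [← Algebra.commutes a w, Algebra.smul_def, map_mul, map_mul, map_ofNat]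
      noncomm_ring
    have hsmul : Commute u ((2 * a) • w) := by
      simpa [hcomm] using (Algebra.commute_algebraMap_right (a * a) u).sub_right hsub
    simpa only [ha.unit_spec, Units.smul_def, smul_smul, ha.val_inv_mul, one_smul] using
      hsmul.smul_right (ha.unit⁻¹)
  obtain ⟨u, v, w, hu, hv, hw, hs⟩ := h
  have huv := commute_of_add_add_eq hu hw hv (by rw [hs]; abel)
  have huw := commute_of_add_add_eq hu hv hw hs.symm
  have hvw := commute_of_add_add_eq hv hu hw (by rw [hs]; abel)
  have := hu.quartic_eq_zero_of_commute hv hw huv huw hvw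
  rwa [← hs, ← map_pow, ← map_one (algebraMap R M), ← map_ofNat (algebraMap R M) 9, ← map_sub,
    ← map_sub, ← map_mul] at this

section Matrix

open Matrix

variable {ι R : Type*} [Fintype ι] [DecidableEq ι] [CommRing R] {U V W : Matrix ι ι R}

theorem quartic_eq_zero_of_forall_isSumOfThree [Nonempty ι]
    (h : ∀ A : Matrix ι ι R, IsSumOfThree IsInvolutive A) {a : R} (ha : IsUnit (2 * a)) :
    (a ^ 2 - 1) * (a ^ 2 - 9) = 0 := by
  rw [← scalar_inj (n := ι), map_zero]
  exact algebraMap_quartic_eq_zero ha (h (algebraMap R _ a))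

theorem IsInvolutive.transpose (hU : IsInvolutive U) : IsInvolutive Uᵀ := by
  rw [IsInvolutive, ← transpose_pow, hU, transpose_one]

theorem two_mul_three_pow_card_eq_zero_of_add_add_eq_zero
    (hι : Odd (Fintype.card ι)) (hU : IsInvolutive U)
    (hV : IsInvolutive V) (hW : IsInvolutive W) (h : U + V + W = 0) :
    (2 * 3 ^ Fintype.card ι : R) = 0 := by
  obtain rfl : U = -(V + W) := by rw [← add_eq_zero_iff_eq_neg, ← add_assoc, h]
  have hanti : -(V + W) * (V - W) = -((V - W) * -(V + W)) := by
    have : -(V + W) * (V - W) + (V - W) * -(V + W) = 2 * (W * W - V * V) := by noncomm_ring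
    rw [← add_eq_zero_iff_eq_neg, this, hV.mul_self, hW.mul_self, sub_self, mul_zero]
  have hsq : (V - W) * (V - W) = (3 : R) • (1 : Matrix ι ι R) := by
    have : (V - W) * (V - W) = 2 * (V * V) + 2 * (W * W) - -(V + W) * -(V + W) := by noncomm_ring
    rw [this, hU.mul_self, hV.mul_self, hW.mul_self, ofNat_smul_eq_nsmul]
    noncomm_ring
  have hdet : 2 * (V - W).det = 0 := by
    have := congrArg det hanti
    rw [det_neg, hι.neg_one_pow, det_mul, det_mul] at this
    have hU' : IsUnit (-(V + W)).det := (isUnit_iff_isUnit_det _).1 hU.isUnit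
    rw [← hU'.mul_left_eq_zero]
    linear_combination this
  have hdet_sq : (V - W).det * (V - W).det = 3 ^ Fintype.card ι := by
    rw [← det_mul, hsq, det_smul, det_one, mul_one]
  rw [← hdet_sq, ← mul_assoc, hdet, zero_mul]

theorem IsInvolutive.trace_eq_card [IsReduced R] [CharP R 2] (hU : IsInvolutive U) :
    U.trace = Fintype.card ι := by
  have hnil : IsNilpotent (U - 1) := by
    have h2 : (2 : Matrix ι ι R) = 0 := by
      rw [← map_ofNat (algebraMap R _) 2, CharTwo.two_eq_zero, map_zero]
    refine ⟨2, ?_⟩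
    have : (U - 1) ^ 2 = U * U - 1 - 2 * (U - 1) := by noncomm_ring
    rw [this, hU.mul_self, h2, zero_mul, sub_self, sub_zero]
  have := (isNilpotent_trace_of_isNilpotent hnil).eq_zero
  rwa [trace_sub, trace_one, sub_eq_zero] at this

theorem two_ne_zero_of_forall_isSumOfThree {F : Type*} [Field F] [Nonempty ι]
    (h : ∀ A : Matrix ι ι F, IsSumOfThree IsInvolutive A) : (2 : F) ≠ 0 := by
  intro h2
  have : CharP F 2 := CharTwo.of_one_ne_zero_of_two_eq_zero one_ne_zero h2
  have htrace (A : Matrix ι ι F) : A.trace = Fintype.card ι + Fintype.card ι + Fintype.card ι := by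
    obtain ⟨U, V, W, hU, hV, hW, rfl⟩ := h A
    rw [trace_add, trace_add, hU.trace_eq_card, hV.trace_eq_card, hW.trace_eq_card]
  obtain ⟨i⟩ := ‹Nonempty ι›
  have := (htrace (single i i 1)).trans (htrace 0).symm
  simp at this

theorem IsInvolutive.toSquareBlockProp_ne {o : ι} (hU : IsInvolutive U)
    (hcol : ∀ i ≠ o, U i o = 0) : IsInvolutive (U.toSquareBlockProp (· ≠ o)) := by
  refine .of_mul_self ?_
  ext i j
  have := congrFun₂ hU.mul_self i j
  rw [mul_apply, Fintype.sum_eq_add_sum_subtype_ne _ o, hcol i i.2, zero_mul, zero_add] at this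
  simpa [mul_apply, toSquareBlockProp, one_apply, Subtype.ext_iff] using this

theorem apply_eq_zero_of_commute {κ : Type*} [Fintype κ] [NoZeroDivisors R]
    {X C : Matrix κ κ R} {o i : κ} (hX : Commute X C) (hC : ∀ i ≠ o, ∀ j, C i j = 0)
    (hCo : C o o ≠ 0) (hi : i ≠ o) : X i o = 0 := by
  have hXC : X i o * C o o = 0 := by
    rw [← Fintype.sum_eq_single (f := fun k => X i k * C k o) o
      fun k hk => by rw [hC k hk, mul_zero], ← mul_apply, hX.eq, mul_apply]
    exact Finset.sum_eq_zero fun k _ => by rw [hC i hi, zero_mul]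
  exact (mul_eq_zero.1 hXC).resolve_right hCo

/- `U` and `V` inherit from `W` the eigenvector `e_o`, so the three involutions induced on the
quotient by its span sum to zero, in odd dimension. -/
theorem three_eq_zero_of_add_add_eq_single_of_col_eq_zero [IsDomain R] {o : ι} (h2 : (2 : R) ≠ 0)
    (hι : Even (Fintype.card ι)) (hU : IsInvolutive U) (hV : IsInvolutive V)
    (hW : IsInvolutive W) (h : U + V + W = single o o 1) (hcol : ∀ i ≠ o, W i o = 0) :
    (3 : R) = 0 := by
  by_contra h3
  have hw : W o o * W o o = 1 := by
    have := congrFun₂ hW.mul_self o o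
    rwa [mul_apply, Fintype.sum_eq_single o fun i hi => by rw [hcol i hi, mul_zero],
      one_apply_eq] at this
  have hw' : 1 - 2 * W o o ≠ 0 := fun h0 => h3 <| by
    linear_combination (-4 : R) * hw - (2 * W o o + 1) * h0
  let C := single o o 1 * single o o 1 - single o o 1 * W - W * single o o 1
  have hC (i : ι) (hi : i ≠ o) (j : ι) : C i j = 0 := by
    by_cases hj : j = o
    · simp [C, hj, hi, hi.symm, hcol i hi]
    · simp [C, hj, hi, hi.symm]
  have hCo : C o o ≠ 0 := by
    have : C o o = 1 - 2 * W o o := by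
      simp only [C, Matrix.sub_apply, single_mul_apply_same, mul_single_apply_same,
        single_apply_same, one_mul, mul_one]
      ring
    rwa [this]
  have hodd : Odd (Fintype.card {i // i ≠ o}) := by
    rw [Fintype.card_subtype_compl, Fintype.card_subtype_eq]
    exact Nat.Even.sub_odd (Fintype.card_pos_iff.2 ⟨o⟩) hι odd_one
  have hsum : U.toSquareBlockProp (· ≠ o) + V.toSquareBlockProp (· ≠ o) +
      W.toSquareBlockProp (· ≠ o) = 0 := by
    ext i j
    exact (congrFun₂ h i j).trans (by simp [i.2.symm])
  have := two_mul_three_pow_card_eq_zero_of_add_add_eq_zero hodd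
    (hU.toSquareBlockProp_ne fun i => apply_eq_zero_of_commute
      (hU.commute_of_add_add_eq hV hW h) hC hCo)
    (hV.toSquareBlockProp_ne fun i => apply_eq_zero_of_commute
      (hV.commute_of_add_add_eq hU hW (by rwa [add_comm V])) hC hCo)
    (hW.toSquareBlockProp_ne hcol) hsum
  exact mul_ne_zero h2 (pow_ne_zero _ h3) this

section FinTwo

variable {R : Type*} [CommRing R] [IsDomain R] {U V : Matrix (Fin 2) (Fin 2) R}

theorem IsInvolutive.trace_eq_zero_or_eq_one_or_eq_neg_one (hU : IsInvolutive U) :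
    U.trace = 0 ∨ U = 1 ∨ U = -1 := by
  rw [or_iff_not_imp_left]
  intro htr
  have hmul := hU.mul_self
  rw [trace_fin_two] at htr
  simp only [← Matrix.ext_iff, Fin.forall_fin_two, mul_apply, Fin.sum_univ_two, Matrix.neg_apply,
    one_apply_eq, one_apply_ne, ne_eq, zero_ne_one, one_ne_zero, not_false_eq_true, neg_zero]
    at hmul ⊢
  obtain ⟨⟨h00, h01⟩, h10, h11⟩ := hmul
  have hb : U 0 1 = 0 := by
    refine (mul_eq_zero.1 ?_).resolve_right htr
    linear_combination h01
  have hc : U 1 0 = 0 := by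
    refine (mul_eq_zero.1 ?_).resolve_right htr
    linear_combination h10
  have hd : U 0 0 = U 1 1 := by
    rw [← sub_eq_zero]
    refine (mul_eq_zero.1 ?_).resolve_right htr
    linear_combination h00 - h11
  have ha : U 0 0 = 1 ∨ U 0 0 = -1 := by
    rw [← mul_self_eq_one_iff]
    linear_combination h00 - U 1 0 * hb
  grind

theorem three_eq_zero_of_add_eq_fin_two (hU : IsInvolutive U) (hV : IsInvolutive V) {t : R}
    (h : U + V = !![1, t; -1, 0]) : (3 : R) = 0 := by
  have htr : U.trace + V.trace = 1 := by rw [← trace_add, h]; simp [trace_fin_two]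
  have h10 : U 1 0 + V 1 0 = -1 := by rw [← Matrix.add_apply, h]; simp
  rcases hU.trace_eq_zero_or_eq_one_or_eq_neg_one with hU' | rfl | rfl <;>
  rcases hV.trace_eq_zero_or_eq_one_or_eq_neg_one with hV' | rfl | rfl <;> simp_all <;> grind

end FinTwo

/-- The `ι × 2` matrix with columns `e_o` and `W e_o`. For involutive `W` its range is invariant
under both `W` and `single o o 1`, and it is used to compress matrices to `2 × 2` ones. -/
def krylovMatrix (W : Matrix ι ι R) (o : ι) : Matrix ι (Fin 2) R :=
  (of ![Pi.single o 1, W.col o])ᵀ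

theorem single_sub_eq_krylovMatrix_mul (W : Matrix ι ι R) (o : ι) :
    single o o 1 * single o o 1 - single o o 1 * W - W * single o o 1 =
      krylovMatrix W o * ((!![1, -1; -1, 0] : Matrix _ _ R) * (krylovMatrix Wᵀ o)ᵀ) := by
  ext i j
  by_cases hi : i = o <;> by_cases hj : j = o <;>
    simp [krylovMatrix, mul_apply (M := (of _)ᵀ), eq_comm (a := o), hi, hj, sub_eq_add_neg]

theorem mul_krylovMatrix (hW : IsInvolutive W) (o : ι) :
    W * krylovMatrix W o = krylovMatrix W o * (!![0, 1; 1, 0] : Matrix _ _ R) := by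
  ext i b
  have := congrFun₂ hW.mul_self i o
  rw [mul_apply, one_apply] at this
  fin_cases b <;> simp [krylovMatrix, mul_apply, Pi.single_apply, Fin.sum_univ_two, this]

theorem single_mul_krylovMatrix (W : Matrix ι ι R) (o : ι) :
    single o o (1 : R) * krylovMatrix W o = krylovMatrix W o * !![1, W o o; 0, 0] := by
  ext i b
  by_cases hi : i = o <;> fin_cases b <;>
    simp [krylovMatrix, mul_apply, eq_comm (a := o), hi, single_apply]

section

variable {κ : Type*} [Fintype κ] [DecidableEq κ] {P : Matrix ι κ R} {L : Matrix κ ι R}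
  {Q : Matrix κ ι R} {Q' : Matrix ι κ R}

theorem IsInvolutive.of_mul_eq_mul {U' : Matrix κ κ R} (hU : IsInvolutive U) (hL : L * P = 1)
    (h : U * P = P * U') : IsInvolutive U' := by
  refine .of_mul_self ?_
  calc U' * U' = L * (P * U') * U' := by rw [← Matrix.mul_assoc L, hL, Matrix.one_mul]
    _ = L * (U * (P * U')) := by rw [← h, Matrix.mul_assoc, Matrix.mul_assoc U, h]
    _ = 1 := by rw [← h, ← Matrix.mul_assoc U, hU.mul_self, Matrix.one_mul, hL]

omit [DecidableEq ι] in
theorem exists_mul_eq_mul_of_commute (hQ : Q * Q' = 1) (h : Commute U (P * Q)) :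
    ∃ U' : Matrix κ κ R, U * P = P * U' := by
  refine ⟨Q * U * Q', ?_⟩
  calc U * P = U * (P * Q) * Q' := by simp only [Matrix.mul_assoc, hQ, Matrix.mul_one]
    _ = P * (Q * U * Q') := by rw [h.eq]; simp only [Matrix.mul_assoc]

end

variable {F : Type*} [Field F]

theorem exists_mul_krylovMatrix_eq_one {W : Matrix ι ι F} {o i : ι} (hi : i ≠ o) (hW : W i o ≠ 0) :
    ∃ L : Matrix (Fin 2) ι F, L * krylovMatrix W o = 1 := by
  refine ⟨of ![Pi.single o 1 - (W o o / W i o) • Pi.single i 1, (W i o)⁻¹ • Pi.single i 1], ?_⟩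
  ext a b
  fin_cases a <;> fin_cases b <;>
    simp [krylovMatrix, mul_apply, sub_mul, Pi.single_apply, hW, hi.symm, Finset.sum_sub_distrib]

theorem three_eq_zero_of_add_add_eq_single_of_ne_zero {U V W : Matrix ι ι F} {o i j : ι}
    (hU : IsInvolutive U) (hV : IsInvolutive V) (hW : IsInvolutive W)
    (h : U + V + W = single o o 1) (hi : i ≠ o)
    (hWi : W i o ≠ 0) (hj : j ≠ o) (hWj : W o j ≠ 0) : (3 : F) = 0 := by
  obtain ⟨L, hL⟩ := exists_mul_krylovMatrix_eq_one hi hWi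
  obtain ⟨L', hL'⟩ := exists_mul_krylovMatrix_eq_one (W := Wᵀ) hj hWj
  have hQ : (!![1, -1; -1, 0] : Matrix _ _ F) * (krylovMatrix Wᵀ o)ᵀ *
      (L'ᵀ * (!![0, -1; -1, -1] : Matrix _ _ F)) = 1 := by
    rw [Matrix.mul_assoc, ← Matrix.mul_assoc _ L'ᵀ, ← transpose_mul, hL', transpose_one,
      Matrix.one_mul]
    simp [one_fin_two]
  have hCU := hU.commute_of_add_add_eq hV hW h
  have hCV := hV.commute_of_add_add_eq hU hW (x := single o o 1) (by rwa [add_comm V])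
  rw [single_sub_eq_krylovMatrix_mul] at hCU hCV
  obtain ⟨U', hU'⟩ := exists_mul_eq_mul_of_commute hQ hCU
  obtain ⟨V', hV'⟩ := exists_mul_eq_mul_of_commute hQ hCV
  refine three_eq_zero_of_add_eq_fin_two (hU.of_mul_eq_mul hL hU') (hV.of_mul_eq_mul hL hV')
    (t := W o o - 1) ?_
  have hsum : krylovMatrix W o * (U' + V') = krylovMatrix W o * !![1, W o o - 1; -1, 0] := by
    rw [Matrix.mul_add, ← hU', ← hV', ← Matrix.add_mul, eq_sub_of_add_eq h, Matrix.sub_mul,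
      single_mul_krylovMatrix, mul_krylovMatrix hW, ← Matrix.mul_sub]
    congr 1
    ext a b
    fin_cases a <;> fin_cases b <;> simp
  rw [← Matrix.one_mul (U' + V'), ← hL, Matrix.mul_assoc, hsum, ← Matrix.mul_assoc, hL,
    Matrix.one_mul]

theorem three_eq_zero_of_add_add_eq_single {U V W : Matrix ι ι F} {o : ι} (h2 : (2 : F) ≠ 0)
    (hι : Even (Fintype.card ι)) (hU : IsInvolutive U) (hV : IsInvolutive V)
    (hW : IsInvolutive W) (h : U + V + W = single o o 1) : (3 : F) = 0 := by
  by_cases hcol : ∀ i ≠ o, W i o = 0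
  · exact three_eq_zero_of_add_add_eq_single_of_col_eq_zero h2 hι hU hV hW h hcol
  by_cases hrow : ∀ i ≠ o, W o i = 0
  · exact three_eq_zero_of_add_add_eq_single_of_col_eq_zero h2 hι hU.transpose hV.transpose
      hW.transpose (by rw [← transpose_add, ← transpose_add, h, transpose_single]) hrow
  push Not at hcol hrow
  obtain ⟨i, hi, hWi⟩ := hcol
  obtain ⟨j, hj, hWj⟩ := hrow
  exact three_eq_zero_of_add_add_eq_single_of_ne_zero hU hV hW h hi hWi hj hWj

theorem three_eq_zero_of_forall_isSumOfThree [Nonempty ι]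
    (h : ∀ A : Matrix ι ι F, IsSumOfThree IsInvolutive A) : (3 : F) = 0 := by
  have h2 := two_ne_zero_of_forall_isSumOfThree h
  rcases (Fintype.card ι).even_or_odd with hι | hι
  · obtain ⟨U, V, W, hU, hV, hW, hs⟩ := h (single (Classical.arbitrary ι) (Classical.arbitrary ι) 1)
    exact three_eq_zero_of_add_add_eq_single h2 hι hU hV hW hs.symm
  · obtain ⟨U, V, W, hU, hV, hW, hs⟩ := h 0
    have := two_mul_three_pow_card_eq_zero_of_add_add_eq_zero hι hU hV hW hs.symm
    exact eq_zero_of_pow_eq_zero ((mul_eq_zero.1 this).resolve_left h2)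

theorem isSumOfThree_isInvolutive_of_surjective {S : Type*} [CommRing S] {f : R →+* S}
    (hf : Function.Surjective f) (h : ∀ A : Matrix ι ι R, IsSumOfThree IsInvolutive A)
    (A : Matrix ι ι S) : IsSumOfThree IsInvolutive A := by
  have hA : f.mapMatrix (A.map (Function.surjInv hf)) = A := by
    ext i j
    exact Function.surjInv_eq hf (A i j)
  rw [← hA]
  exact (h _).map f.mapMatrix fun _ hU => hU.map f.mapMatrix

theorem pow_three_eq_self_of_forall_isSumOfThree [Nonempty ι]
    (h : ∀ A : Matrix ι ι F, IsSumOfThree IsInvolutive A) (x : F) : x ^ 3 = x := by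
  obtain rfl | hx := eq_or_ne x 0
  · exact zero_pow three_ne_zero
  have h3 := three_eq_zero_of_forall_isSumOfThree h
  have hquartic := quartic_eq_zero_of_forall_isSumOfThree h
    (isUnit_iff_ne_zero.2 (mul_ne_zero (two_ne_zero_of_forall_isSumOfThree h) hx))
  have hx2 : (x ^ 2 - 1) * x ^ 2 = 0 := by linear_combination hquartic + 3 * (x ^ 2 - 1) * h3
  linear_combination x * (mul_eq_zero.1 hx2).resolve_right (pow_ne_zero 2 hx)

theorem mem_jacobson_bot_of_forall_isMaximal {x : R}
    (hx : ∀ I : Ideal R, I.IsMaximal → Ideal.Quotient.mk I x = 0) :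
    x ∈ Ideal.jacobson (⊥ : Ideal R) :=
  Ideal.mem_sInf.2 fun {I} hI => Ideal.Quotient.eq_zero_iff_mem.1 (hx I hI.2)

theorem three_eq_zero_and_pow_three_eq_self_of_forall_isSumOfThree [Nonempty ι]
    (h : ∀ A : Matrix ι ι R, IsSumOfThree IsInvolutive A) : (3 : R) = 0 ∧ ∀ x : R, x ^ 3 = x := by
  have hquot (I : Ideal R) :=
    isSumOfThree_isInvolutive_of_surjective (Ideal.Quotient.mk_surjective (I := I)) h
  have three_mem : (3 : R) ∈ Ideal.jacobson (⊥ : Ideal R) :=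
    mem_jacobson_bot_of_forall_isMaximal fun I hI => by
      let _ := Ideal.Quotient.field I
      rw [map_ofNat]
      exact three_eq_zero_of_forall_isSumOfThree (hquot I)
  have cube_sub_mem (x : R) : x ^ 3 - x ∈ Ideal.jacobson (⊥ : Ideal R) :=
    mem_jacobson_bot_of_forall_isMaximal fun I hI => by
      let _ := Ideal.Quotient.field I
      rw [map_sub, map_pow, sub_eq_zero]
      exact pow_three_eq_self_of_forall_isSumOfThree (hquot I) _
  have h3 : (3 : R) = 0 := by
    have h4 : IsUnit (2 * 2 : R) := by
      convert Ideal.mem_jacobson_bot.1 three_mem 1 using 1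
      norm_num
    have hquartic := quartic_eq_zero_of_forall_isSumOfThree h h4
    rw [← (Ideal.mem_jacobson_bot.1 three_mem (-2)).mul_left_eq_zero]
    linear_combination hquartic
  refine ⟨h3, fun x => ?_⟩
  set j := x ^ 3 - x with hj
  have hunit (y : R) : IsUnit (j * y + 1) := Ideal.mem_jacobson_bot.1 (cube_sub_mem x) y
  have h2 : IsUnit (2 : R) := .of_mul_eq_one 2 (by linear_combination h3)
  have hquartic := quartic_eq_zero_of_forall_isSumOfThree h (h2.mul (hunit 1))
  have hsq : (j * 1 + 1) ^ 2 - 1 = 0 := by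
    rw [← ((hunit 1).pow 2).mul_left_eq_zero]
    linear_combination hquartic + 3 * ((j * 1 + 1) ^ 2 - 1) * h3
  rw [← sub_eq_zero, ← hj, ← (hunit (-1)).mul_left_eq_zero]
  linear_combination -hsq + j * h3

end Matrix

section Idempotent

theorem IsInvolutive.two_mul_sub_one {M : Type*} [Ring M] {p : M} (hp : IsIdempotentElem p) :
    IsInvolutive (2 * p - 1) := by
  refine .of_mul_self ?_
  have : (2 * p - 1) * (2 * p - 1) = 4 * (p * p - p) + 1 := by noncomm_ring
  rw [this, hp.eq, sub_self, mul_zero, zero_add]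

theorem isSumOfThree_isInvolutive_of_neg {M : Type*} [Ring M] {x : M} (h3 : (3 : M) = 0)
    (h : IsSumOfThree IsIdempotentElem (-x)) : IsSumOfThree IsInvolutive x := by
  obtain ⟨p, q, s, hp, hq, hs, hx⟩ := h
  refine ⟨2 * p - 1, 2 * q - 1, 2 * s - 1, .two_mul_sub_one hp, .two_mul_sub_one hq,
    .two_mul_sub_one hs, ?_⟩
  calc x = 2 * -x - 3 + 3 * (x + 1) := by noncomm_ring; simp
    _ = 2 * (p + q + s) - (1 + 1 + 1) := by rw [hx, h3, zero_mul, add_zero, ← h3]; norm_num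
    _ = 2 * p - 1 + (2 * q - 1) + (2 * s - 1) := by noncomm_ring

theorem exists_isIdempotentElem_add_eq {R : Type*} [CommRing R] {x : R} (h3 : (3 : R) = 0)
    (hx : x ^ 3 = x) : ∃ p q : R, IsIdempotentElem p ∧ IsIdempotentElem q ∧ p + q = x := by
  refine ⟨x ^ 2, x - x ^ 2, ?_, ?_, add_sub_cancel _ _⟩
  · rw [IsIdempotentElem]
    linear_combination x * hx
  · rw [IsIdempotentElem]
    linear_combination (x - 2) * hx + (x ^ 2 - x) * h3

end Idempotent

section Zigzag

variable {R M : Type*} [CommRing R] [AddCommGroup M] [Module R M]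

theorem isIdempotentElem_of_apply_eq_smul_add {κ : Type*} (b : Module.Basis κ R M)
    {f : Module.End R M}
    (h : ∀ k, ∃ (c : R) (y : M), IsIdempotentElem c ∧ f y = 0 ∧ f (b k) = c • (b k + y)) :
    IsIdempotentElem f := by
  refine b.ext fun k => ?_
  obtain ⟨c, y, hc, hy, hk⟩ := h k
  rw [Module.End.mul_apply, hk, map_smul, map_add, hk, hy, add_zero, smul_smul, hc.eq]

theorem isIdempotentElem_of_trace_eq_one {κ : Type*} [Finite κ]
    (b : Module.Basis κ R M) {f : Module.End R M} {o : κ} (h : ∀ k ≠ o, f (b k) = 0)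
    (htr : LinearMap.trace R M f = 1) : IsIdempotentElem f := by
  classical
  have := Fintype.ofFinite κ
  have hf (x : M) : f x = b.repr x o • f (b o) := by
    conv_lhs => rw [← b.sum_repr x, map_sum]
    rw [Fintype.sum_eq_single o fun k hk => by rw [map_smul, h k hk, smul_zero], map_smul]
  have ho : b.repr (f (b o)) o = 1 := by
    rw [← htr, LinearMap.trace_eq_matrix_trace R b, Matrix.trace]
    simp only [Matrix.diag_apply, LinearMap.toMatrix_apply]
    rw [Fintype.sum_eq_single o fun k hk => by rw [h k hk, map_zero, Finsupp.zero_apply]]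
  ext x
  rw [Module.End.mul_apply, hf x, map_smul, hf (f (b o)), ho, one_smul]

/- `p + q` is a sum of links `b k ↦ b k + b (k + 1)`, up to the values at the two ends. Links of
equal parity are disjoint, so the even ones form an idempotent `p` and the odd ones an
idempotent `q`. -/
theorem exists_isIdempotentElem_add_apply_eq {m : ℕ} (b : Module.Basis (Fin (m + 1)) R M) {β γ : R}
    (hβ : IsIdempotentElem β) (hγ : IsIdempotentElem γ) :
    ∃ p q : Module.End R M, IsIdempotentElem p ∧ IsIdempotentElem q ∧
      (∀ k : Fin m, (p + q) (b k.castSucc) =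
        b k.succ + (1 + if (k : ℕ) = 0 then β else 0) • b k.castSucc) ∧
      (p + q) (b (Fin.last m)) = (γ + if m = 0 then β else 0) • b (Fin.last m) := by
  let c : Fin (m + 1) → R := Fin.snoc (fun _ => 1) γ
  let y : Fin (m + 1) → M := Fin.snoc (fun k => b k.succ) 0
  let d : Fin (m + 1) → R := fun k => if (k : ℕ) = 0 then β else 0
  let p : Module.End R M := b.constr R fun k => if Even (k : ℕ) then c k • (b k + y k) else 0
  let q : Module.End R M := b.constr R fun k =>
    if Even (k : ℕ) then d k • b k else c k • (b k + y k)
  have hc (k) : IsIdempotentElem (c k) := by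
    cases k using Fin.lastCases with
    | last => simpa only [c, Fin.snoc_last] using hγ
    | cast k => simpa only [c, Fin.snoc_castSucc] using .one
  have hd (k) : IsIdempotentElem (d k) := by
    unfold d
    split_ifs
    exacts [hβ, .zero]
  have hp : IsIdempotentElem p := isIdempotentElem_of_apply_eq_smul_add b fun k => by
    by_cases hk : Even (k : ℕ)
    · refine ⟨c k, y k, hc k, ?_, by simp only [p, b.constr_basis, if_pos hk]⟩
      cases k using Fin.lastCases with
      | last => simp only [y, Fin.snoc_last, map_zero]
      | cast k =>
        have hk' : ¬ Even (k.succ : ℕ) := by simpa [Nat.even_add_one] using hk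
        simp only [p, y, Fin.snoc_castSucc, b.constr_basis, if_neg hk']
    · exact ⟨0, 0, .zero, map_zero p, by simp only [p, b.constr_basis, if_neg hk, zero_smul]⟩
  have hq : IsIdempotentElem q := isIdempotentElem_of_apply_eq_smul_add b fun k => by
    by_cases hk : Even (k : ℕ)
    · exact ⟨d k, 0, hd k, map_zero q, by simp only [q, b.constr_basis, if_pos hk, add_zero]⟩
    · refine ⟨c k, y k, hc k, ?_, by simp only [q, b.constr_basis, if_neg hk]⟩
      cases k using Fin.lastCases with
      | last => simp only [y, Fin.snoc_last, map_zero]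
      | cast k =>
        have hk' : Even (k.succ : ℕ) := by simpa [Nat.even_add_one] using hk
        have hdk : d k.succ = 0 := if_neg k.val.succ_ne_zero
        simp only [q, y, Fin.snoc_castSucc, b.constr_basis, if_pos hk', hdk, zero_smul]
  have hpq (k) : (p + q) (b k) = c k • (b k + y k) + d k • b k := by
    simp only [LinearMap.add_apply, p, q, b.constr_basis]
    split_ifs with hk
    · rfl
    · have hk0 : (k : ℕ) ≠ 0 := fun h0 => hk (h0 ▸ Even.zero)
      simp only [d, if_neg hk0, zero_add, zero_smul, add_zero]
  refine ⟨p, q, hp, hq, fun k => ?_, ?_⟩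
  · rw [hpq]
    simp only [c, y, d, Fin.snoc_castSucc, Fin.val_castSucc]
    module
  · rw [hpq]
    simp only [c, y, d, Fin.snoc_last, Fin.val_last]
    module

/- `f - (p + q)` kills all but the last basis vector and has trace one. -/
theorem isSumOfThree_isIdempotentElem_of_apply_castSucc {m : ℕ}
    (b : Module.Basis (Fin (m + 1)) R M) {f : Module.End R M} {β γ : R}
    (hβ : IsIdempotentElem β) (hγ : IsIdempotentElem γ)
    (hf : ∀ k : Fin m,
      f (b k.castSucc) = b k.succ + (1 + if (k : ℕ) = 0 then β else 0) • b k.castSucc)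
    (htr : LinearMap.trace R M f = m + 1 + β + γ) : IsSumOfThree IsIdempotentElem f := by
  obtain ⟨p, q, hp, hq, hcast, hlast⟩ := exists_isIdempotentElem_add_apply_eq b hβ hγ
  have htr_pq : LinearMap.trace R M (p + q) = m + β + γ := by
    have hdiag (k : Fin m) : b.repr ((p + q) (b k.castSucc)) k.castSucc =
        1 + if (k : ℕ) = 0 then β else 0 := by
      simp [hcast, k.castSucc_lt_succ.ne]
    have hsum : (∑ k : Fin m, if (k : ℕ) = 0 then β else 0) + (if m = 0 then β else 0) = β := by
      refine (Fin.sum_univ_castSucc fun k : Fin (m + 1) =>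
        if (k : ℕ) = 0 then β else 0).symm.trans ?_
      simp
    rw [LinearMap.trace_eq_matrix_trace R b, Matrix.trace, Fin.sum_univ_castSucc]
    simp only [Matrix.diag_apply, LinearMap.toMatrix_apply, hdiag, hlast, Finset.sum_add_distrib,
      Finset.sum_const, Finset.card_univ, Fintype.card_fin, nsmul_one, map_smul, b.repr_self,
      Finsupp.smul_single, smul_eq_mul, mul_one, Finsupp.single_eq_same]
    linear_combination hsum
  refine ⟨p, q, f - (p + q), hp, hq, ?_, (add_sub_cancel _ _).symm⟩
  refine isIdempotentElem_of_trace_eq_one b (o := Fin.last m) (fun k hk => ?_) ?_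
  · obtain ⟨k, rfl⟩ := Fin.exists_castSucc_eq.2 hk
    rw [LinearMap.sub_apply, hcast, hf, sub_self]
  · rw [map_sub, htr, htr_pq]
    ring

end Zigzag

section Field

open Polynomial

variable {K : Type*} [Field K]

/- The Newton basis: `b k` is the class of `(X - d 0) ⋯ (X - d (k - 1))`. -/
theorem exists_basis_X_smul_eq {q : K[X]} (hq : q ≠ 0) (d : ℕ → K) :
    ∃ b : Module.Basis (Fin q.natDegree) K (K[X] ⧸ Submodule.span K[X] {q}),
      ∀ (k : ℕ) (hk : k + 1 < q.natDegree),
        (X : K[X]) • b ⟨k, k.lt_succ_self.trans hk⟩ =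
          b ⟨k + 1, hk⟩ + d k • b ⟨k, k.lt_succ_self.trans hk⟩ := by
  let S : Polynomial.Sequence K :=
    ⟨fun k => Lagrange.nodal (Finset.range k) d, fun k => by simp [Lagrange.degree_nodal]⟩
  let π : K[X] →ₗ[K] K[X] ⧸ Submodule.span K[X] {q} := (Submodule.mkQ _).restrictScalars K
  have hspan : ⊤ ≤ Submodule.span K (Set.range fun k : Fin q.natDegree => π (S k)) := by
    have himage :
        (Set.range fun k : Fin q.natDegree => π (S k)) = π '' (S '' Set.Iio q.natDegree) := by
      ext x
      simp [Fin.exists_iff]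
    rw [himage, Submodule.span_image, S.span_degreeLT fun k _ => by
      rw [isUnit_iff_ne_zero, Polynomial.leadingCoeff_ne_zero]; exact S.ne_zero k]
    intro x _
    obtain ⟨f, rfl⟩ := Submodule.mkQ_surjective _ x
    refine ⟨f % q, ?_, ?_⟩
    · rw [SetLike.mem_coe, mem_degreeLT, ← degree_eq_natDegree hq]
      exact degree_mod_lt f hq
    · refine ((Submodule.Quotient.eq _).2 ?_).symm
      rw [EuclideanDomain.mod_eq_sub_mul_div, sub_sub_cancel]
      exact Ideal.mem_span_singleton.2 (dvd_mul_right _ _)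
  refine ⟨basisOfTopLeSpanOfCardEqFinrank _ hspan ?_, fun k hk => ?_⟩
  · rw [Fintype.card_fin]
    exact (finrank_quotient_span_eq_natDegree (f := q)).symm
  · rw [coe_basisOfTopLeSpanOfCardEqFinrank]
    have hS : X * S k = S (k + 1) + d k • S k := by
      change X * Lagrange.nodal (Finset.range k) d =
        Lagrange.nodal (Finset.range (k + 1)) d + d k • Lagrange.nodal (Finset.range k) d
      rw [Lagrange.nodal, Lagrange.nodal, Finset.prod_range_succ, smul_eq_C_mul]
      ring
    have := congrArg π hS
    rwa [map_add, map_smul] at this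

theorem isSumOfThree_lsmul_X_quotient_span (h3 : (3 : K) = 0) (hK : ∀ x : K, x ^ 3 = x) {q : K[X]}
    (hq : q ≠ 0) :
    IsSumOfThree IsIdempotentElem
      (Algebra.lsmul K K (K[X] ⧸ Submodule.span K[X] {q}) (X : K[X])) := by
  set f := Algebra.lsmul K K (K[X] ⧸ Submodule.span K[X] {q}) (X : K[X])
  rcases hn : q.natDegree with _ | m
  · obtain ⟨b, -⟩ := exists_basis_X_smul_eq hq 0
    exact ⟨0, 0, 0, .zero, .zero, .zero, b.ext fun k => (k.cast hn).elim0⟩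
  · obtain ⟨β, γ, hβ, hγ, hs⟩ := exists_isIdempotentElem_add_eq h3
      (hK (LinearMap.trace K _ f - (m + 1)))
    obtain ⟨b, hb⟩ := exists_basis_X_smul_eq hq fun k => 1 + if k = 0 then β else 0
    refine isSumOfThree_isIdempotentElem_of_apply_castSucc (b.reindex (finCongr hn)) hβ hγ
      (fun k => ?_) (by linear_combination -hs)
    simp only [Module.Basis.reindex_apply]
    exact hb k (by omega)

theorem isSumOfThree_lsmul_of_linearEquiv {R A M N : Type*} [CommSemiring R] [Semiring A]
    [Algebra R A] [AddCommMonoid M] [Module R M] [Module A M] [IsScalarTower R A M]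
    [AddCommMonoid N] [Module R N] [Module A N] [IsScalarTower R A N] (e : M ≃ₗ[A] N) {a : A}
    (h : IsSumOfThree IsIdempotentElem (Algebra.lsmul R R M a)) :
    IsSumOfThree IsIdempotentElem (Algebra.lsmul R R N a) := by
  have hconj : (e.restrictScalars R).conjRingEquiv (Algebra.lsmul R R M a) =
      Algebra.lsmul R R N a := by
    ext x
    simp
  rw [← hconj]
  exact h.map _ fun _ hp => hp.map _

theorem isSumOfThree_lsmul_pi {R A κ : Type*} [CommSemiring R] [Semiring A] [Algebra R A]
    {M : κ → Type*} [∀ i, AddCommMonoid (M i)] [∀ i, Module R (M i)] [∀ i, Module A (M i)]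
    [∀ i, IsScalarTower R A (M i)] {a : A}
    (h : ∀ i, IsSumOfThree IsIdempotentElem (Algebra.lsmul R R (M i) a)) :
    IsSumOfThree IsIdempotentElem (Algebra.lsmul R R (∀ i, M i) a) := by
  choose p q s hp hq hs hsum using h
  have piMap_isIdempotentElem {p : ∀ i, Module.End R (M i)} (hp : ∀ i, IsIdempotentElem (p i)) :
      IsIdempotentElem (LinearMap.piMap p : Module.End R (∀ i, M i)) :=
    LinearMap.ext fun x => funext fun i => LinearMap.congr_fun (hp i) (x i)
  exact ⟨_, _, _, piMap_isIdempotentElem hp, piMap_isIdempotentElem hq, piMap_isIdempotentElem hs,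
    LinearMap.ext fun x => funext fun i => LinearMap.congr_fun (hsum i) (x i)⟩

theorem isSumOfThree_isIdempotentElem_end (h3 : (3 : K) = 0) (hK : ∀ x : K, x ^ 3 = x)
    {V : Type*} [AddCommGroup V] [Module K V] [Module.Finite K V] (f : Module.End K V) :
    IsSumOfThree IsIdempotentElem f := by
  classical
  obtain ⟨κ, _, q, hq, e, ⟨E⟩⟩ := Module.equiv_directSum_of_isTorsion
    (Module.AEval.isTorsion_of_finiteDimensional K V f)
  have hX : IsSumOfThree IsIdempotentElem (Algebra.lsmul K K (Module.AEval' f) (X : K[X])) :=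
    isSumOfThree_lsmul_of_linearEquiv
      (E.trans (DirectSum.linearEquivFunOnFintype K[X] κ _)).symm
      (isSumOfThree_lsmul_pi fun i =>
        isSumOfThree_lsmul_X_quotient_span h3 hK (pow_ne_zero _ (hq i).ne_zero))
  have hf : (Module.AEval'.of f).symm.conjRingEquiv
      (Algebra.lsmul K K (Module.AEval' f) (X : K[X])) = f := by
    ext x
    simp [Module.AEval'.X_smul_of]
  rw [← hf]
  exact hX.map _ fun _ hp => hp.map _

theorem isSumOfThree_isInvolutive_of_field {ι : Type*} [Fintype ι] [DecidableEq ι]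
    (h3 : (3 : K) = 0) (hK : ∀ x : K, x ^ 3 = x) (A : Matrix ι ι K) :
    IsSumOfThree IsInvolutive A := by
  have h3' : (3 : Matrix ι ι K) = 0 := by
    rw [← map_ofNat (algebraMap K _) 3, h3, map_zero]
  refine isSumOfThree_isInvolutive_of_neg h3' ?_
  rw [← Matrix.toLinAlgEquiv'.symm_apply_apply (-A)]
  exact (isSumOfThree_isIdempotentElem_end h3 hK _).map _ fun _ hp => hp.map _

end Field

section Ring

variable {R : Type*} [CommRing R]

theorem isReduced_of_pow_three_eq_self (hR : ∀ x : R, x ^ 3 = x) : IsReduced R :=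
  (isReduced_iff_pow_one_lt 3 (by norm_num)).2 fun x hx => by rw [← hR x, hx]

theorem isField_of_pow_three_eq_self [IsDomain R] (hR : ∀ x : R, x ^ 3 = x) : IsField R := by
  refine ⟨exists_pair_ne R, mul_comm, fun {x} hx => ⟨x, ?_⟩⟩
  apply mul_left_cancel₀ hx
  linear_combination hR x

theorem isArtinianRing_of_pow_three_eq_self [IsNoetherianRing R] (hR : ∀ x : R, x ^ 3 = x) :
    IsArtinianRing R := by
  refine isArtinianRing_iff_krullDimLE_zero.2 (Ring.krullDimLE_zero_iff.2 fun I hI => ?_)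
  refine Ideal.Quotient.maximal_of_isField I (isField_of_pow_three_eq_self fun x => ?_)
  obtain ⟨x, rfl⟩ := Ideal.Quotient.mk_surjective x
  rw [← map_pow, hR]

variable {ι : Type*} [Fintype ι] [DecidableEq ι]

theorem isSumOfThree_isInvolutive_of_pi {κ : Type*} {K : κ → Type*} [∀ k, CommRing (K k)]
    (h : ∀ k, ∀ A : Matrix ι ι (K k), IsSumOfThree IsInvolutive A) (A : Matrix ι ι (∀ k, K k)) :
    IsSumOfThree IsInvolutive A := by
  choose U V W hU hV hW hs using fun k => h k (Matrix.piRingEquiv A k)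
  have isInvolutive_symm {U : ∀ k, Matrix ι ι (K k)} (hU : ∀ k, IsInvolutive (U k)) :
      IsInvolutive (Matrix.piRingEquiv.symm U) :=
    IsInvolutive.map (funext hU) _
  refine ⟨_, _, _, isInvolutive_symm hU, isInvolutive_symm hV, isInvolutive_symm hW, ?_⟩
  rw [← map_add, ← map_add, RingEquiv.eq_symm_apply]
  exact funext hs

theorem isSumOfThree_isInvolutive_of_isNoetherianRing [IsNoetherianRing R] (h3 : (3 : R) = 0)
    (hR : ∀ x : R, x ^ 3 = x) (A : Matrix ι ι R) : IsSumOfThree IsInvolutive A := by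
  have := isReduced_of_pow_three_eq_self hR
  have := isArtinianRing_of_pow_three_eq_self hR
  have hpi (B : Matrix ι ι (∀ I : MaximalSpectrum R, R ⧸ I.asIdeal)) :
      IsSumOfThree IsInvolutive B := by
    refine isSumOfThree_isInvolutive_of_pi (fun I => ?_) B
    let _ := Ideal.Quotient.field I.asIdeal
    have h3' : (3 : R ⧸ I.asIdeal) = 0 := by
      rw [← map_ofNat (Ideal.Quotient.mk _) 3, h3, map_zero]
    refine isSumOfThree_isInvolutive_of_field h3' fun x => ?_
    obtain ⟨x, rfl⟩ := Ideal.Quotient.mk_surjective x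
    rw [← map_pow, hR]
  exact isSumOfThree_isInvolutive_of_surjective (f := (IsArtinianRing.equivPi R).symm.toRingHom)
    (IsArtinianRing.equivPi R).symm.surjective hpi A

/- The entries of `A` generate a Noetherian subring. -/
theorem isSumOfThree_isInvolutive_of_pow_three_eq_self (h3 : (3 : R) = 0)
    (hR : ∀ x : R, x ^ 3 = x) (A : Matrix ι ι R) : IsSumOfThree IsInvolutive A := by
  let s : Set R := Set.range fun ij : ι × ι => A ij.1 ij.2
  let S : Subalgebra ℤ R := Algebra.adjoin ℤ s
  have : Algebra.FiniteType ℤ S :=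
    S.fg_iff_finiteType.1 (Subalgebra.fg_def.2 ⟨s, Set.finite_range _, rfl⟩)
  have : IsNoetherianRing S := Algebra.FiniteType.isNoetherianRing ℤ S
  let B : Matrix ι ι S := .of fun i j => ⟨A i j, Algebra.subset_adjoin ⟨(i, j), rfl⟩⟩
  have hB : IsSumOfThree IsInvolutive B :=
    isSumOfThree_isInvolutive_of_isNoetherianRing (Subtype.ext h3) (fun x => Subtype.ext (hR x)) B
  exact hB.map S.val.toRingHom.mapMatrix fun _ hU => hU.map _

end Ring

/-- For a commutative ring `R` and `n ≥ 1`, every matrix in `M_n(R)` is a sum of three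
involutive matrices if and only if `3 = 0` in `R` and `R` satisfies the identity
`x^3 = x` (i.e. `R` is a subdirect product of copies of `ℤ/3`). -/
theorem matrix_sum_three_involutions_iff (R : Type*) [CommRing R] (n : ℕ) (hn : 1 ≤ n) :
    (∀ A : Matrix (Fin n) (Fin n) R,
      ∃ U₁ U₂ U₃ : Matrix (Fin n) (Fin n) R,
        U₁ ^ 2 = 1 ∧ U₂ ^ 2 = 1 ∧ U₃ ^ 2 = 1 ∧ A = U₁ + U₂ + U₃) ↔
    ((3 : R) = 0 ∧ ∀ x : R, x ^ 3 = x) := by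
  have : Nonempty (Fin n) := ⟨⟨0, hn⟩⟩
  exact ⟨three_eq_zero_and_pow_three_eq_self_of_forall_isSumOfThree,
    fun h => isSumOfThree_isInvolutive_of_pow_three_eq_self h.1 h.2⟩
end
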